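/- arXiv:1602.00925 — 5 statements merged into one kernel-verified Lean document; each statement's English description precedes it below -/
import Mathlib

section
/- Fix an integer d ≥ 2. Define S := {(α, α′) ∈ (ℝ/ℤ)² : α ≠ α′ and d·α = d·α′}, and for integers m > n ≥ 1 define S*(m,n) := {(α, α′) ∈ S : dᵐ·α = dⁿ·α and dᵐ·α′ = dⁿ·α′} minus the set of those pairs (α, α′) with d^{m−n}·α = α and d^{m−n}·α′ = α′. Let λ_S be the probability measure on (ℝ/ℤ)² given by λ_S := (1/(d−1)) · Σ_{j=1}^{d−1} (γ_j)_*(λ), where γ_j : ℝ/ℤ → (ℝ/ℤ)² is the map γ_j(α) = (α, α + j/d) and λ is the Haar probability measure on ℝ/ℤ. Then for any sequences (m_k), (n_k) with m_k > n_k ≥ 1 and m_k → ∞, the sets S*(m_k, n_k) are nonempty and finite, and the uniform probability measures on S*(m_k, n_k) converge weakly to λ_S. -/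
open MeasureTheory Filter Topology
open scoped ENNReal

/-- The uniform probability measure on a (nonempty finite) subset `S` of a measurable
space: `(1/Card S) · Σ_{x ∈ S} δ_x`. -/
noncomputable def uniformOn {X : Type*} [MeasurableSpace X] (S : Set X) : Measure X :=
  (Nat.card S : ℝ≥0∞)⁻¹ • Measure.sum (fun x : S => Measure.dirac (x : X))

/-- Weak convergence of a sequence of measures: convergence of integrals of every
bounded continuous real-valued function. -/
def WeakTendsto {X : Type*} [TopologicalSpace X] [MeasurableSpace X]
    (μ : ℕ → Measure X) (ν : Measure X) : Prop :=
  ∀ g : BoundedContinuousFunction X ℝ,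
    Tendsto (fun n => ∫ x, g x ∂(μ n)) atTop (𝓝 (∫ x, g x ∂ν))

/-- The points of the circle killed by `N` are the classes of `i / N`, `i < N`. -/
theorem UnitAddCircle.nsmul_eq_zero_iff_exists_div {N : ℕ} (hN : 0 < N) (x : UnitAddCircle) :
    N • x = 0 ↔ ∃ i < N, (((i : ℝ) / (N : ℝ) : ℝ) : UnitAddCircle) = x := by
  simpa using AddCircle.nsmul_eq_zero_iff (p := (1 : ℝ)) (u := x) hN

theorem UnitAddCircle.coe_div_inj {N i i' : ℕ} (hi : i < N) (hi' : i' < N)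
    (h : (((i : ℝ) / (N : ℝ) : ℝ) : UnitAddCircle) = (((i' : ℝ) / (N : ℝ) : ℝ) : UnitAddCircle)) :
    i = i' := by
  have hN : (0 : ℝ) < N := by exact_mod_cast (Nat.zero_le i).trans_lt hi
  have mem : ∀ l : ℕ, l < N → (l : ℝ) / N ∈ Set.Ico (0 : ℝ) (0 + 1) := fun l hl => by
    refine ⟨by positivity, ?_⟩
    rw [zero_add, div_lt_one hN]
    exact_mod_cast hl
  have := (AddCircle.coe_eq_coe_iff_of_mem_Ico (p := (1 : ℝ)) (mem i hi) (mem i' hi')).1 h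
  rw [div_left_inj' hN.ne'] at this
  exact_mod_cast this

/-- Riemann sums over the torsion points of the circle converge to the Haar integral. -/
theorem UnitAddCircle.tendsto_average_div {f : UnitAddCircle → ℝ} (hf : Continuous f) :
    Tendsto (fun N : ℕ => (N : ℝ)⁻¹ *
      ∑ i ∈ Finset.range N, f (((i : ℝ) / (N : ℝ) : ℝ) : UnitAddCircle))
      atTop (𝓝 (∫ x, f x)) := by
  rw [Metric.tendsto_atTop]
  intro ε hε
  obtain ⟨δ, hδ, hfδ⟩ := Metric.uniformContinuous_iff.1
    (CompactSpace.uniformContinuous_of_continuous hf) (ε / 2) (half_pos hε)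
  obtain ⟨M, hM⟩ := exists_nat_gt (1 / δ)
  refine ⟨max M 1, fun N hN => ?_⟩
  have hN1 : (0 : ℝ) < N := by exact_mod_cast (le_max_right M 1).trans hN
  have hNδ : (1 : ℝ) / N < δ := by
    have : (M : ℝ) ≤ N := by exact_mod_cast (le_max_left M 1).trans hN
    rw [div_lt_comm₀ hN1 hδ]
    linarith
  set F : ℝ → ℝ := fun x => f (x : UnitAddCircle) with hF
  have hFc : Continuous F := hf.comp (AddCircle.continuous_mk' 1)
  have hstep : ∀ i : ℕ, ((i + 1 : ℕ) : ℝ) / N - (i : ℝ) / N = 1 / N := fun i => by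
    push_cast; ring
  have hint : ∫ x, f x =
      ∑ i ∈ Finset.range N, ∫ x in ((i : ℝ) / N)..(((i + 1 : ℕ) : ℝ) / N), F x := by
    rw [intervalIntegral.sum_integral_adjacent_intervals (a := fun i : ℕ => (i : ℝ) / N)
      (fun _ _ => hFc.intervalIntegrable _ _), ← UnitAddCircle.intervalIntegral_preimage 0 f]
    simp [hF, div_self hN1.ne']
  have hsum : (N : ℝ)⁻¹ * ∑ i ∈ Finset.range N, F ((i : ℝ) / N)
      = ∑ i ∈ Finset.range N, ∫ x in ((i : ℝ) / N)..(((i + 1 : ℕ) : ℝ) / N), F ((i : ℝ) / N) := by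
    rw [Finset.mul_sum]
    refine Finset.sum_congr rfl fun i _ => ?_
    rw [intervalIntegral.integral_const, hstep, smul_eq_mul, one_div]
  rw [Real.dist_eq, hint]
  change |(N : ℝ)⁻¹ * ∑ i ∈ Finset.range N, F ((i : ℝ) / N) - _| < ε
  rw [hsum, ← Finset.sum_sub_distrib]
  refine (Finset.abs_sum_le_sum_abs _ _).trans_lt ?_
  have hterm : ∀ i ∈ Finset.range N,
      |(∫ x in ((i : ℝ) / N)..(((i + 1 : ℕ) : ℝ) / N), F ((i : ℝ) / N)) -
        ∫ x in ((i : ℝ) / N)..(((i + 1 : ℕ) : ℝ) / N), F x| ≤ ε / 2 * (1 / N) := fun i _ => by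
    rw [← intervalIntegral.integral_sub (by simp) (hFc.intervalIntegrable _ _), ← Real.norm_eq_abs,
      ← abs_of_pos (one_div_pos.2 hN1), ← hstep i]
    refine intervalIntegral.norm_integral_le_of_norm_le_const fun x hx => ?_
    rw [Set.uIoc_of_le (by linarith [hstep i, one_div_pos.2 hN1])] at hx
    refine (hfδ ?_).le
    rw [dist_eq_norm, ← AddCircle.coe_sub]
    refine QuotientAddGroup.norm_mk_le_norm.trans_lt ?_
    rw [Real.norm_eq_abs, abs_sub_comm, abs_of_pos (by linarith [hx.1])]
    linarith [hx.2, hstep i]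
  refine (Finset.sum_le_sum hterm).trans_lt ?_
  rw [Finset.sum_const, Finset.card_range, nsmul_eq_mul]
  field_simp
  linarith

theorem integral_uniformOn_coe_finset {X : Type*} [MeasurableSpace X] [MeasurableSingletonClass X]
    (s : Finset X) (g : X → ℝ) :
    ∫ x, g x ∂(uniformOn (s : Set X)) = (s.card : ℝ)⁻¹ * ∑ x ∈ s, g x := by
  have h : Measure.sum (fun x : (s : Set X) => Measure.dirac (x : X)) =
      ∑ x ∈ s, Measure.dirac x := Measure.sum_coe_finset s _
  rw [uniformOn, h, integral_smul_measure,
    integral_finsetSum_measure fun x _ => integrable_dirac (by simp)]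
  simp [integral_dirac]

/-- The pair `(i / N, i / N + j / d)` in the square of the circle. -/
noncomputable def torsionPair (d N : ℕ) (q : ℕ × ℕ) : UnitAddCircle × UnitAddCircle :=
  ((((q.1 : ℝ) / (N : ℝ) : ℝ) : UnitAddCircle),
    (((q.1 : ℝ) / (N : ℝ) : ℝ) : UnitAddCircle) + (((q.2 : ℝ) / (d : ℝ) : ℝ) : UnitAddCircle))

theorem torsionPair_injOn (d N : ℕ) :
    Set.InjOn (torsionPair d N)
      (Finset.range N ×ˢ Finset.Icc 1 (d - 1) : Finset (ℕ × ℕ)) := by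
  rintro ⟨i, j⟩ h ⟨i', j'⟩ h' e
  simp only [Finset.coe_product, Set.mem_prod, Finset.mem_coe, Finset.mem_range,
    Finset.mem_Icc] at h h'
  simp only [torsionPair, Prod.mk.injEq] at e
  obtain rfl := UnitAddCircle.coe_div_inj h.1 h'.1 e.1
  rw [UnitAddCircle.coe_div_inj (by omega) (by omega) (add_left_cancel e.2)]

/-- No pair is removed from the preperiodic pairs, since two distinct points cannot both be periodic
when they have the same image under multiplication by `d`. -/
theorem misiurewiczPairs_eq_image (d : ℕ) (hd : 2 ≤ d) {m n : ℕ} (hn : 1 ≤ n) (hnm : n < m) :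
    {p : UnitAddCircle × UnitAddCircle |
          (p.1 ≠ p.2 ∧ d • p.1 = d • p.2) ∧
          ((d ^ m) • p.1 = (d ^ n) • p.1 ∧ (d ^ m) • p.2 = (d ^ n) • p.2)} \
        {p : UnitAddCircle × UnitAddCircle |
          (d ^ (m - n)) • p.1 = p.1 ∧ (d ^ (m - n)) • p.2 = p.2} =
      ((Finset.range (d ^ m - d ^ n) ×ˢ Finset.Icc 1 (d - 1)).image
        (torsionPair d (d ^ m - d ^ n)) : Finset _) := by
  have hlt : d ^ n < d ^ m := Nat.pow_lt_pow_right (by omega) hnm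
  have hN : 0 < d ^ m - d ^ n := by omega
  have hd0 : 0 < d := by omega
  have pow_congr : ∀ {l : ℕ}, 1 ≤ l → ∀ {x y : UnitAddCircle}, d • x = d • y →
      (d ^ l) • x = (d ^ l) • y := fun {l} hl x y h => by
    obtain ⟨l, rfl⟩ := Nat.exists_eq_add_of_le' hl
    rw [pow_succ, mul_nsmul', mul_nsmul', h]
  have preper : ∀ x : UnitAddCircle,
      (d ^ m) • x = (d ^ n) • x ↔ (d ^ m - d ^ n) • x = 0 := fun x => by
    rw [sub_nsmul _ hlt.le, ← sub_eq_add_neg, sub_eq_zero]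
  ext ⟨x, y⟩
  simp only [Set.mem_sdiff, Set.mem_ofPred_eq, Finset.coe_image, Set.mem_image, Finset.mem_coe,
    Finset.mem_product, Finset.mem_range, Finset.mem_Icc, Prod.exists, torsionPair, Prod.mk.injEq]
  constructor
  · rintro ⟨⟨⟨hne, hdxy⟩, hx, -⟩, -⟩
    obtain ⟨i, hi, rfl⟩ := (UnitAddCircle.nsmul_eq_zero_iff_exists_div hN x).1 ((preper x).1 hx)
    obtain ⟨j, hj, hjy⟩ := (UnitAddCircle.nsmul_eq_zero_iff_exists_div hd0
      (y - (((i : ℝ) / ((d ^ m - d ^ n : ℕ) : ℝ) : ℝ) : UnitAddCircle))).1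
      (by rw [nsmul_sub, hdxy, sub_self])
    refine ⟨i, j, ⟨hi, ?_, by omega⟩, rfl, by rw [hjy]; abel⟩
    rcases Nat.eq_zero_or_pos j with rfl | h
    · refine absurd ?_ hne
      simp only [Nat.cast_zero, zero_div, AddCircle.coe_zero] at hjy
      exact (sub_eq_zero.1 hjy.symm).symm
    · exact h
  · rintro ⟨i, j, ⟨hi, hj1, hjd⟩, rfl, rfl⟩
    have hx := (UnitAddCircle.nsmul_eq_zero_iff_exists_div hN _).2 ⟨i, hi, rfl⟩
    have hj := (UnitAddCircle.nsmul_eq_zero_iff_exists_div hd0 _).2 ⟨j, by omega, rfl⟩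
    set x : UnitAddCircle := (((i : ℝ) / ((d ^ m - d ^ n : ℕ) : ℝ) : ℝ) : UnitAddCircle)
    set z : UnitAddCircle := (((j : ℝ) / (d : ℝ) : ℝ) : UnitAddCircle) with hz
    have hz0 : z ≠ 0 := fun h => by
      have := UnitAddCircle.coe_div_inj (N := d) (i := j) (i' := 0) (by omega) hd0
        (by simpa [hz] using h)
      omega
    have hne : x ≠ x + z := by simpa using hz0
    have hdxy : d • x = d • (x + z) := by rw [nsmul_add, hj, add_zero]
    have hxper := (preper x).2 hx
    refine ⟨⟨⟨hne, hdxy⟩, hxper, ?_⟩, fun h => hne ?_⟩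
    · rw [← pow_congr hn hdxy, ← pow_congr (hn.trans hnm.le) hdxy, hxper]
    · exact h.1.symm.trans ((pow_congr (by omega) hdxy).trans h.2)

theorem tendsto_pow_sub_pow_atTop {d : ℕ} (hd : 2 ≤ d) {m n : ℕ → ℕ} (hnm : ∀ k, n k < m k)
    (hm : Tendsto m atTop atTop) : Tendsto (fun k => d ^ m k - d ^ n k) atTop atTop := by
  refine tendsto_atTop_mono (fun k => ?_) hm
  obtain ⟨l, hl⟩ := Nat.exists_eq_add_of_lt (hnm k)
  have h1 : d ^ n k ≤ d ^ (n k + l) := Nat.pow_le_pow_right (by omega) (by omega)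
  have h2 : n k + l < d ^ (n k + l) := Nat.lt_pow_self (by omega)
  have h3 : 2 * d ^ (n k + l) ≤ d ^ (n k + l + 1) := by
    rw [pow_succ']; exact Nat.mul_le_mul_right _ hd
  rw [hl]
  omega

/-- For `d ≥ 2`, the sets `S*(m_k, n_k)` of Misiurewicz pairs are nonempty and finite,
and the uniform probability measures on them converge weakly to the natural measure
`λ_S = (1/(d−1)) Σ_{j=1}^{d−1} (γ_j)_* λ`, where `γ_j(α) = (α, α + j/d)`. -/
theorem misiurewicz_pairs_equidistribute (d : ℕ) (hd : 2 ≤ d)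
    (m n : ℕ → ℕ) (hn : ∀ k, 1 ≤ n k) (hnm : ∀ k, n k < m k)
    (hm : Tendsto m atTop atTop)
    (Sstar : ℕ → Set (UnitAddCircle × UnitAddCircle))
    (hSstar : ∀ k, Sstar k =
      {p : UnitAddCircle × UnitAddCircle |
          (p.1 ≠ p.2 ∧ d • p.1 = d • p.2) ∧
          ((d ^ m k) • p.1 = (d ^ n k) • p.1 ∧ (d ^ m k) • p.2 = (d ^ n k) • p.2)} \
        {p : UnitAddCircle × UnitAddCircle |
          (d ^ (m k - n k)) • p.1 = p.1 ∧ (d ^ (m k - n k)) • p.2 = p.2})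
    (lamS : Measure (UnitAddCircle × UnitAddCircle))
    (hlamS : lamS = ((d : ℝ≥0∞) - 1)⁻¹ •
      ∑ j ∈ Finset.Icc 1 (d - 1),
        Measure.map
          (fun α : UnitAddCircle => (α, α + (((j : ℝ) / (d : ℝ) : ℝ) : UnitAddCircle)))
          (volume : Measure UnitAddCircle)) :
    (∀ k, (Sstar k).Finite ∧ (Sstar k).Nonempty) ∧
      WeakTendsto (fun k => uniformOn (Sstar k)) lamS := by
  obtain rfl : Sstar = fun k =>
      (((Finset.range (d ^ m k - d ^ n k) ×ˢ Finset.Icc 1 (d - 1)).image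
      (torsionPair d (d ^ m k - d ^ n k)) : Finset _) : Set (UnitAddCircle × UnitAddCircle)) :=
    funext fun k => (hSstar k).trans (misiurewiczPairs_eq_image d hd (hn k) (hnm k))
  refine ⟨fun k => ⟨Finset.finite_toSet _, ?_⟩, fun g => ?_⟩
  · have hlt : d ^ n k < d ^ m k := Nat.pow_lt_pow_right (by omega) (hnm k)
    simp only [Finset.coe_nonempty, Finset.image_nonempty, Finset.nonempty_product,
      Finset.nonempty_range_iff, Finset.nonempty_Icc]
    omega
  have hγ : ∀ j : ℕ, Continuous fun α : UnitAddCircle =>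
      (α, α + (((j : ℝ) / (d : ℝ) : ℝ) : UnitAddCircle)) := fun j => by fun_prop
  have hlim : ∫ p, g p ∂lamS = ((d - 1 : ℕ) : ℝ)⁻¹ * ∑ j ∈ Finset.Icc 1 (d - 1),
      ∫ α : UnitAddCircle, g (α, α + (((j : ℝ) / (d : ℝ) : ℝ) : UnitAddCircle)) := by
    have hcast : (d : ℝ≥0∞) - 1 = ((d - 1 : ℕ) : ℝ≥0∞) := by simp
    rw [hlamS, integral_smul_measure, integral_finsetSum_measure, hcast]
    · simp only [ENNReal.toReal_inv, ENNReal.toReal_natCast, smul_eq_mul]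
      congr 1
      exact Finset.sum_congr rfl fun j _ =>
        integral_map (hγ j).aemeasurable g.continuous.aestronglyMeasurable
    · exact fun _ _ => g.integrable _
  have hsum : ∀ k, ∫ p, g p ∂(uniformOn
        (((Finset.range (d ^ m k - d ^ n k) ×ˢ Finset.Icc 1 (d - 1)).image
          (torsionPair d (d ^ m k - d ^ n k)) : Finset _) : Set (UnitAddCircle × UnitAddCircle))) =
      ((d - 1 : ℕ) : ℝ)⁻¹ * ∑ j ∈ Finset.Icc 1 (d - 1), (((d ^ m k - d ^ n k : ℕ) : ℝ)⁻¹ *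
        ∑ i ∈ Finset.range (d ^ m k - d ^ n k), g (torsionPair d (d ^ m k - d ^ n k) (i, j))) :=
    fun k => by
      rw [integral_uniformOn_coe_finset, Finset.card_image_of_injOn (torsionPair_injOn _ _),
        Finset.sum_image (torsionPair_injOn _ _), Finset.card_product, Finset.card_range,
        Nat.card_Icc, Nat.add_sub_cancel, Finset.sum_product_right, ← Finset.mul_sum, Nat.cast_mul,
        mul_inv_rev, mul_assoc]
  simp only [hsum, hlim]
  refine (tendsto_finsetSum _ fun j _ => ?_).const_mul _
  exact (UnitAddCircle.tendsto_average_div (g.continuous.comp (hγ j))).comp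
    (tendsto_pow_sub_pow_atTop hd hnm hm)
end

section
/- Fix an integer d ≥ 2. For each i ∈ {0, …, d−2}, let (m_{k,i}) and (n_{k,i}) be sequences of integers with m_{k,i} > n_{k,i} ≥ 1 and m_{k,i} → ∞ as k → ∞, and set A_{k,i} := {θ ∈ ℝ/ℤ : d^{m_{k,i}}·θ = d^{n_{k,i}}·θ and d^{m_{k,i}−n_{k,i}}·θ ≠ θ}. Then the product of the uniform probability measures on the finite sets A_{k,0} × ⋯ × A_{k,d−2} ⊆ (ℝ/ℤ)^{d−1} converges weakly, as k → ∞, to the product measure λ^{⊗(d−1)}, where λ is the Haar probability measure on ℝ/ℤ. -/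
open MeasureTheory Filter Topology
open scoped ENNReal

/-- Weak convergence of probability measures on a compact space may be tested on a family of
continuous functions whose linear span is dense. -/
theorem tendsto_probabilityMeasure_of_dense_span {X : Type*} [TopologicalSpace X] [CompactSpace X]
    [MeasurableSpace X] [OpensMeasurableSpace X] {μ : ℕ → ProbabilityMeasure X}
    {ν : ProbabilityMeasure X} {S : Set C(X, ℂ)}
    (hS : (Submodule.span ℂ S).topologicalClosure = ⊤)
    (h : ∀ f ∈ S, Tendsto (fun k => ∫ x, f x ∂(μ k : Measure X)) atTop
      (𝓝 (∫ x, f x ∂(ν : Measure X)))) :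
    Tendsto μ atTop (𝓝 ν) := by
  have integrable (f : C(X, ℂ)) (ρ : ProbabilityMeasure X) : Integrable f (ρ : Measure X) :=
    (BoundedContinuousFunction.mkOfCompact f).integrable (ρ : Measure X)
  have hspan : ∀ f ∈ Submodule.span ℂ S, Tendsto (fun k => ∫ x, f x ∂(μ k : Measure X)) atTop
      (𝓝 (∫ x, f x ∂(ν : Measure X))) := by
    intro f hf
    induction hf using Submodule.span_induction with
    | mem f hf => exact h f hf
    | zero => simp
    | add f g _ _ hf hg =>
      simp only [ContinuousMap.add_apply]
      simp_rw [integral_add (integrable f _) (integrable g _)]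
      exact hf.add hg
    | smul c f _ hf =>
      simp only [ContinuousMap.smul_apply, integral_smul]
      exact hf.const_smul c
  rw [ProbabilityMeasure.tendsto_iff_forall_integral_rclike_tendsto ℂ]
  intro f
  rw [Metric.tendsto_atTop]
  intro ε hε
  have hmem : f.toContinuousMap ∈ closure (Submodule.span ℂ S : Set C(X, ℂ)) := by
    rw [← Submodule.topologicalClosure_coe, hS]
    trivial
  obtain ⟨g, hg, hfg⟩ := Metric.mem_closure_iff.mp hmem (ε / 3) (by positivity)
  have approx (ρ : ProbabilityMeasure X) :
      dist (∫ x, f x ∂(ρ : Measure X)) (∫ x, g x ∂(ρ : Measure X)) ≤ ε / 3 := by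
    rw [dist_eq_norm, ← integral_sub (f.integrable _) (integrable g ρ)]
    refine (norm_integral_le_of_norm_le_const (C := ε / 3) (.of_forall fun x => ?_)).trans ?_
    · rw [← dist_eq_norm]
      exact (ContinuousMap.dist_apply_le_dist (f := f.toContinuousMap) x).trans hfg.le
    · simp
  obtain ⟨K, hK⟩ := Metric.tendsto_atTop.mp (hspan g hg) (ε / 3) (by positivity)
  refine ⟨K, fun k hk => ?_⟩
  have h1 := approx (μ k)
  have h2 := hK k hk
  have h3 := approx ν
  rw [dist_comm] at h3
  linarith [dist_triangle4 (∫ x, f x ∂(μ k : Measure X)) (∫ x, g x ∂(μ k : Measure X))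
    (∫ x, g x ∂(ν : Measure X)) (∫ x, f x ∂(ν : Measure X))]

theorem isProbabilityMeasure_uniformOn {X : Type*} [MeasurableSpace X] {S : Finset X}
    (hS : S.Nonempty) : IsProbabilityMeasure (uniformOn (S : Set X)) := by
  refine ⟨?_⟩
  have hcard : (S.card : ℝ≥0∞) ≠ 0 := by simpa using hS.ne_empty
  simp [uniformOn, ENNReal.inv_mul_cancel hcard]

theorem integral_uniformOn {X : Type*} [MeasurableSpace X] [MeasurableSingletonClass X]
    (S : Finset X) (f : X → ℂ) :
    ∫ x, f x ∂(uniformOn (S : Set X)) = (S.card : ℂ)⁻¹ * ∑ x ∈ S, f x := by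
  have h := integral_sum_dirac (f := f) (x := fun x : (S : Set X) => (x : X))
    (c := fun _ => 1) (by simp)
  simp only [one_smul, ENNReal.toReal_one] at h
  rw [uniformOn, integral_smul_measure, h, tsum_fintype, ← Finset.sum_coe_sort S f]
  simp

/-- The `N`-torsion points of the circle. -/
noncomputable def circleTorsion (N : ℕ) [NeZero N] : Finset UnitAddCircle :=
  Finset.univ.map ⟨ZMod.toAddCircle, ZMod.toAddCircle_injective N⟩

@[simp]
theorem card_circleTorsion (N : ℕ) [NeZero N] : (circleTorsion N).card = N := by
  simp [circleTorsion, ZMod.card]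

@[simp]
theorem mem_circleTorsion {N : ℕ} [NeZero N] {θ : UnitAddCircle} :
    θ ∈ circleTorsion N ↔ N • θ = 0 := by
  simp only [circleTorsion, Finset.mem_map, Finset.mem_univ, true_and,
    Function.Embedding.coeFn_mk]
  constructor
  · rintro ⟨a, rfl⟩
    rw [← map_nsmul]
    simp
  · intro h
    obtain ⟨j, -, rfl⟩ := (AddCircle.nsmul_eq_zero_iff (NeZero.pos N)).mp h
    exact ⟨j, by rw [ZMod.toAddCircle_natCast, mul_one]⟩

theorem sum_circleTorsion_fourier (N : ℕ) [NeZero N] (j : ℤ) :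
    ∑ θ ∈ circleTorsion N, fourier j θ = if (N : ℤ) ∣ j then (N : ℂ) else 0 := by
  have hterm (a : ZMod N) :
      (fourier j (ZMod.toAddCircle a) : ℂ) = ZMod.stdAddChar (a * (j : ZMod N)) := by
    rw [fourier_apply, ← map_zsmul, zsmul_eq_mul, mul_comm]
    rfl
  simp only [circleTorsion, Finset.sum_map, Function.Embedding.coeFn_mk, hterm]
  rw [AddChar.sum_mulShift _ (ZMod.isPrimitive_stdAddChar N)]
  simp [ZMod.intCast_zmod_eq_zero_iff_dvd, ZMod.card]

theorem integral_fourier_of_ne_zero {j : ℤ} (hj : j ≠ 0) :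
    ∫ θ : UnitAddCircle, (fourier j θ : ℂ) = 0 :=
  integral_eq_zero_of_add_right_eq_neg (μ := volume)
    (fourier_add_half_inv_index hj zero_lt_one)

instance isProbabilityMeasure_volume_unitAddCircle :
    IsProbabilityMeasure (volume : Measure UnitAddCircle) :=
  ⟨UnitAddCircle.measure_univ⟩

/-- The strictly preperiodic points for multiplication by `d` with preperiod at most `n` and
period dividing `m - n` are the `d ^ n * (d ^ (m - n) - 1)`-torsion points that are not
`d ^ (m - n) - 1`-torsion points. -/
theorem preperiodic_eq_circleTorsion_sdiff {d m n : ℕ} (hnm : n < m)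
    [NeZero (d ^ n * (d ^ (m - n) - 1))] [NeZero (d ^ (m - n) - 1)] :
    {θ : UnitAddCircle | (d ^ m) • θ = (d ^ n) • θ ∧ (d ^ (m - n)) • θ ≠ θ} =
      ((circleTorsion (d ^ n * (d ^ (m - n) - 1)) \ circleTorsion (d ^ (m - n) - 1) :
        Finset UnitAddCircle) : Set UnitAddCircle) := by
  have hpos : 0 < d ^ (m - n) - 1 := NeZero.pos _
  have hsub (θ : UnitAddCircle) : (d ^ (m - n) - 1) • θ = (d ^ (m - n)) • θ - θ := by
    rw [sub_nsmul _ (by lia), one_nsmul, sub_eq_add_neg]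
  ext θ
  have hN : (d ^ n * (d ^ (m - n) - 1)) • θ = (d ^ m) • θ - (d ^ n) • θ := by
    rw [mul_nsmul', hsub, nsmul_sub, ← mul_nsmul', ← pow_add, Nat.add_sub_cancel' hnm.le]
  simp only [Set.mem_ofPred_eq, Finset.coe_sdiff, Set.mem_sdiff, Finset.mem_coe,
    mem_circleTorsion, hN, hsub, sub_eq_zero, ne_eq]

/-- The `j`-th Fourier coefficient of the uniform measure on the `N`-torsion points that are not
`M`-torsion points is `O(|j| / N)`. -/
theorem norm_integral_fourier_uniformOn_sdiff_le {N M : ℕ} [NeZero N] [NeZero M] (hMN : M ∣ N)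
    (hlt : 2 * M ≤ N) {j : ℤ} (hj : j ≠ 0) (hjN : j.natAbs < N) :
    ‖∫ θ, fourier j θ ∂(uniformOn
      ((circleTorsion N \ circleTorsion M : Finset UnitAddCircle) : Set UnitAddCircle))‖ ≤
      2 * j.natAbs / N := by
  have hsub : circleTorsion M ⊆ circleTorsion N := by
    intro θ
    obtain ⟨c, rfl⟩ := hMN
    simp only [mem_circleTorsion, mul_comm M c, mul_nsmul']
    intro h
    simp [h]
  have hj0 : 0 < j.natAbs := Int.natAbs_pos.mpr hj
  have hnot : ¬ (N : ℤ) ∣ j := fun h =>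
    absurd (Nat.le_of_dvd hj0 (Int.natCast_dvd.mp h)) (by lia)
  rw [integral_uniformOn, Finset.sum_sdiff_eq_sub hsub, sum_circleTorsion_fourier,
    sum_circleTorsion_fourier, if_neg hnot, Finset.card_sdiff_of_subset hsub, card_circleTorsion,
    card_circleTorsion, zero_sub, norm_mul, norm_neg, norm_inv, Complex.norm_natCast]
  have hsum : ‖(if (M : ℤ) ∣ j then (M : ℂ) else 0)‖ ≤ j.natAbs := by
    split_ifs with h
    · rw [Complex.norm_natCast]
      exact_mod_cast Nat.le_of_dvd hj0 (Int.natCast_dvd.mp h)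
    · simp
  have hcard : (N : ℝ) / 2 ≤ ((N - M : ℕ) : ℝ) := by
    rw [Nat.cast_sub (by lia)]
    have : (2 * M : ℝ) ≤ N := by exact_mod_cast hlt
    linarith
  have hN : (0 : ℝ) < N := by exact_mod_cast NeZero.pos N
  calc _ ≤ ((N : ℝ) / 2)⁻¹ * j.natAbs := by gcongr
    _ = 2 * j.natAbs / N := by field_simp

/-- The uniform measures on `N`-torsion points that are not `M`-torsion points equidistribute
on the circle as `N` tends to infinity, for `M` a proper divisor of `N`. -/
theorem tendsto_uniformOn_circleTorsion_sdiff {N M : ℕ → ℕ} [∀ k, NeZero (N k)]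
    [∀ k, NeZero (M k)] (hMN : ∀ k, M k ∣ N k) (hlt : ∀ k, 2 * M k ≤ N k)
    (hN : Tendsto N atTop atTop) {μ : ℕ → ProbabilityMeasure UnitAddCircle}
    (hμ : ∀ k, (μ k : Measure UnitAddCircle) = uniformOn
      ((circleTorsion (N k) \ circleTorsion (M k) : Finset UnitAddCircle) : Set UnitAddCircle)) :
    Tendsto μ atTop (𝓝 ⟨volume, inferInstance⟩) := by
  refine tendsto_probabilityMeasure_of_dense_span
    (span_fourier_closure_eq_top (T := (1 : ℝ))) ?_
  rintro _ ⟨j, rfl⟩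
  rcases eq_or_ne j 0 with rfl | hj
  · simp
  · rw [ProbabilityMeasure.coe_mk, integral_fourier_of_ne_zero hj]
    refine squeeze_zero_norm' ?_ ((tendsto_natCast_atTop_atTop.comp hN).const_div_atTop
      (2 * (j.natAbs : ℝ)))
    filter_upwards [hN.eventually_gt_atTop j.natAbs] with k hk
    rw [hμ]
    exact norm_integral_fourier_uniformOn_sdiff_le (hMN k) (hlt k) hj hk

/-- For `d ≥ 2` and, for each coordinate `i ∈ {0,…,d−2}`, sequences
`m i k > n i k ≥ 1` with `m i k → ∞`, the products of the uniform probability measures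
on the sets `A i k = {θ : d^(m i k)·θ = d^(n i k)·θ, d^(m i k − n i k)·θ ≠ θ}` converge
weakly to the `(d−1)`-fold product of the Haar probability measure on `ℝ/ℤ`. -/
theorem misiurewicz_product_equidistribute (d : ℕ) (hd : 2 ≤ d)
    (m n : Fin (d - 1) → ℕ → ℕ)
    (hn : ∀ i k, 1 ≤ n i k) (hnm : ∀ i k, n i k < m i k)
    (hm : ∀ i, Tendsto (m i) atTop atTop)
    (A : Fin (d - 1) → ℕ → Set UnitAddCircle)
    (hA : ∀ i k, A i k =
      {θ : UnitAddCircle |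
        (d ^ m i k) • θ = (d ^ n i k) • θ ∧ (d ^ (m i k - n i k)) • θ ≠ θ}) :
    WeakTendsto
      (fun k => Measure.pi (fun i : Fin (d - 1) => uniformOn (A i k)))
      (Measure.pi (fun _ : Fin (d - 1) => (volume : Measure UnitAddCircle))) := by
  have hdn (i : Fin (d - 1)) (k : ℕ) : 2 ≤ d ^ n i k :=
    hd.trans (Nat.le_self_pow (by have := hn i k; lia) d)
  have hM (i : Fin (d - 1)) (k : ℕ) : NeZero (d ^ (m i k - n i k) - 1) :=
    ⟨by
      have := hnm i k
      have := hd.trans (Nat.le_self_pow (n := m i k - n i k) (by lia) d)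
      lia⟩
  have hN (i : Fin (d - 1)) (k : ℕ) : NeZero (d ^ n i k * (d ^ (m i k - n i k) - 1)) :=
    ⟨mul_ne_zero (by have := hdn i k; lia) (hM i k).out⟩
  have hlt (i : Fin (d - 1)) (k : ℕ) :
      2 * (d ^ (m i k - n i k) - 1) ≤ d ^ n i k * (d ^ (m i k - n i k) - 1) :=
    Nat.mul_le_mul_right _ (hdn i k)
  have hNlim (i : Fin (d - 1)) :
      Tendsto (fun k => d ^ n i k * (d ^ (m i k - n i k) - 1)) atTop atTop := by
    refine tendsto_atTop_mono (fun k => ?_) (hm i)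
    have hsplit : d ^ n i k * (d ^ (m i k - n i k) - 1) = d ^ m i k - d ^ n i k := by
      rw [Nat.mul_sub, mul_one, ← pow_add, Nat.add_sub_cancel' (hnm i k).le]
    obtain ⟨l, hl⟩ : ∃ l, m i k = l + 1 := ⟨m i k - 1, by have := hnm i k; lia⟩
    have hle : d ^ n i k ≤ d ^ l := Nat.pow_le_pow_right (by lia) (by have := hnm i k; lia)
    have hgrow : l + 1 ≤ d ^ l := Nat.lt_pow_self (by lia)
    have hmul : 2 * d ^ l ≤ d ^ (l + 1) := by
      rw [pow_succ, mul_comm]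
      exact Nat.mul_le_mul_left _ hd
    rw [hsplit, hl]
    lia
  have hset (i : Fin (d - 1)) (k : ℕ) : A i k =
      ((circleTorsion (d ^ n i k * (d ^ (m i k - n i k) - 1)) \
        circleTorsion (d ^ (m i k - n i k) - 1) : Finset UnitAddCircle) : Set UnitAddCircle) :=
    (hA i k).trans (preperiodic_eq_circleTorsion_sdiff (hnm i k))
  have hprob (i : Fin (d - 1)) (k : ℕ) : IsProbabilityMeasure (uniformOn (A i k)) := by
    rw [hset]
    refine isProbabilityMeasure_uniformOn (Finset.card_pos.mp ?_)
    refine lt_of_lt_of_le ?_ (Finset.le_card_sdiff _ _)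
    rw [card_circleTorsion, card_circleTorsion]
    have := hlt i k
    have := NeZero.pos (d ^ (m i k - n i k) - 1)
    lia
  let μ (k : ℕ) (i : Fin (d - 1)) : ProbabilityMeasure UnitAddCircle :=
    ⟨uniformOn (A i k), hprob i k⟩
  have hμ : Tendsto μ atTop (𝓝 fun _ => ⟨volume, inferInstance⟩) :=
    tendsto_pi_nhds.mpr fun i => tendsto_uniformOn_circleTorsion_sdiff
      (fun _ => Nat.dvd_mul_left _ _) (hlt i) (hNlim i) fun k => congrArg uniformOn (hset i k)
  exact ProbabilityMeasure.tendsto_iff_forall_integral_tendsto.mp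
    ((ProbabilityMeasure.continuous_pi.tendsto _).comp hμ)
end

section
/- For all integers n > k ≥ 1, the set X(n,k) := {θ ∈ ℝ/ℤ : (−2)^{n−1}·θ = (−2)^{k−1}·θ and (−2)^{n−k}·θ ≠ θ} is finite, and its cardinality d(n,k) equals 2^{n−1} − 2^{k−1} − 2^{n−k} + 1 if n − k is even, and equals 2^{n−1} + 2^{k−1} − 2^{n−k} − 1 if n − k is odd. -/
/-- The `m`-torsion of the circle `ℝ/ℤ` has exactly `|m|` elements. -/
theorem UnitAddCircle.ncard_zsmul_eq_zero (m : ℤ) (hm : m ≠ 0) :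
    {θ : UnitAddCircle | m • θ = 0}.Finite ∧
      {θ : UnitAddCircle | m • θ = 0}.ncard = m.natAbs := by
  have hreg : IsSMulRegular ℝ m := fun x y h => by simpa [hm] using h
  have hfin : {θ : UnitAddCircle | m • θ = 0}.Finite :=
    AddCircle.finite_torsion_of_isSMulRegular_int 1 m hreg
  refine ⟨hfin, le_antisymm ?_ ?_⟩
  · have h := AddCircle.card_torsion_le_of_isSMulRegular_int (1 : ℝ) m hm hreg
    rw [← hfin.cast_ncard_eq] at h
    exact_mod_cast h
  · have hord := AddCircle.addOrderOf_period_div (p := (1 : ℝ)) (Int.natAbs_pos.mpr hm)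
    rw [← Nat.card_zmultiples] at hord
    conv_lhs => rw [← hord]
    refine Set.ncard_le_ncard ?_ hfin
    intro θ hθ
    obtain ⟨j, rfl⟩ := AddSubgroup.mem_zmultiples_iff.mp hθ
    rw [Nat.card_zmultiples] at hord
    rw [Set.mem_ofPred_eq, smul_comm]
    have h : m • (((1 : ℝ) / (m.natAbs : ℝ) : ℝ) : UnitAddCircle) = 0 := by
      rw [← addOrderOf_dvd_iff_zsmul_eq_zero, hord]
      exact Int.natAbs_dvd.mpr dvd_rfl
    rw [h, smul_zero]

/-- The distance from `(-2) ^ d` to `1`, according to the parity of `d`. -/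
theorem Int.abs_neg_two_pow_sub_one (d : ℕ) :
    |(-2 : ℤ) ^ d - 1| = if Even d then 2 ^ d - 1 else 2 ^ d + 1 := by
  have h2 : (1 : ℤ) ≤ 2 ^ d := one_le_pow₀ (by norm_num)
  split_ifs with h
  · rw [h.neg_pow, abs_of_nonneg (by linarith)]
  · rw [(Nat.not_even_iff_odd.mp h).neg_pow, abs_of_neg (by linarith)]
    ring

/-- For integers `n > k ≥ 1`, the set of Misiurewicz combinatorics
`X(n,k) = {θ ∈ ℝ/ℤ : (−2)^(n−1)·θ = (−2)^(k−1)·θ, (−2)^(n−k)·θ ≠ θ}` is finite, with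
cardinality `2^(n−1) − 2^(k−1) − 2^(n−k) + 1` if `n − k` is even and
`2^(n−1) + 2^(k−1) − 2^(n−k) − 1` if `n − k` is odd. -/
theorem card_antiholomorphic_misiurewicz_angles (n k : ℕ) (hk : 1 ≤ k) (hkn : k < n)
    (X : Set UnitAddCircle)
    (hX : X = {θ : UnitAddCircle |
        ((-2 : ℤ) ^ (n - 1)) • θ = ((-2 : ℤ) ^ (k - 1)) • θ ∧
          ((-2 : ℤ) ^ (n - k)) • θ ≠ θ}) :
    X.Finite ∧
      (Nat.card X : ℤ) =
        if Even (n - k) then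
          2 ^ (n - 1) - 2 ^ (k - 1) - 2 ^ (n - k) + 1
        else
          2 ^ (n - 1) + 2 ^ (k - 1) - 2 ^ (n - k) - 1 := by
  obtain ⟨k, rfl⟩ : ∃ j, k = j + 1 := ⟨k - 1, by omega⟩
  obtain ⟨d, rfl⟩ : ∃ d, n = k + 1 + d := ⟨n - (k + 1), by omega⟩
  have hd : d ≠ 0 := by omega
  have e₁ : k + 1 + d - 1 = k + d := by omega
  have e₂ : k + 1 + d - (k + 1) = d := by omega
  simp only [e₁, e₂, Nat.add_sub_cancel] at hX ⊢
  have habs := Int.abs_neg_two_pow_sub_one d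
  have hpow : (2 : ℤ) ≤ 2 ^ d := le_self_pow₀ (by norm_num) hd
  have hq : (-2 : ℤ) ^ d - 1 ≠ 0 := by
    rw [← abs_pos, habs]
    split_ifs <;> linarith
  have hp : (-2 : ℤ) ^ k * ((-2) ^ d - 1) ≠ 0 := mul_ne_zero (by simp) hq
  obtain ⟨finA, cardA⟩ := UnitAddCircle.ncard_zsmul_eq_zero _ hp
  obtain ⟨finB, cardB⟩ := UnitAddCircle.ncard_zsmul_eq_zero _ hq
  have hsub : {θ : UnitAddCircle | ((-2 : ℤ) ^ d - 1) • θ = 0} ⊆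
      {θ | ((-2 : ℤ) ^ k * ((-2) ^ d - 1)) • θ = 0} := fun θ hθ => by
    rw [Set.mem_ofPred_eq] at hθ ⊢
    rw [mul_smul, hθ, smul_zero]
  have hXdiff : X = {θ : UnitAddCircle | ((-2 : ℤ) ^ k * ((-2) ^ d - 1)) • θ = 0} \
      {θ | ((-2 : ℤ) ^ d - 1) • θ = 0} := by
    rw [hX]
    ext θ
    simp only [Set.mem_ofPred_eq, Set.mem_sdiff, mul_sub, mul_one, ← pow_add, sub_smul, one_smul,
      sub_eq_zero, ne_eq]
  have hcard := Set.ncard_sdiff_add_ncard_of_subset hsub finA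
  rw [← hXdiff, cardA, cardB] at hcard
  refine ⟨hXdiff ▸ finA.sdiff, ?_⟩
  rw [Nat.card_coe_set_eq]
  zify at hcard
  rw [abs_mul, abs_pow, habs] at hcard
  norm_num at hcard
  rw [pow_add]
  split_ifs at hcard ⊢ <;> linarith
end

section
/- For c ∈ ℂ, let f_c : ℂ → ℂ be the anti-holomorphic quadratic map f_c(z) = (conj z)² + c, where conj denotes complex conjugation. For all integers n > k > 0, the set Per(n,k) := {c ∈ ℂ : f_c^{∘n}(0) = f_c^{∘k}(0)} is finite; in particular its subset Per*(n,k) := {c ∈ Per(n,k) : f_c^{∘(n−k)}(0) ≠ 0} is finite. -/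
section FilteredAlgebra

variable {K R : Type*} [Field K] [CommRing R] [Algebra K R]

/-- The span of `1, x, y`; its `m`-th power consists of the polynomial expressions in `x, y`
of total degree at most `m`. -/
def linearForms (K : Type*) {R : Type*} [Field K] [CommRing R] [Algebra K R] (x y : R) :
    Submodule K R :=
  Submodule.span K {1, x, y}

lemma one_mem_linearForms (x y : R) : 1 ∈ linearForms K x y :=
  Submodule.subset_span (by simp)

lemma left_mem_linearForms (x y : R) : x ∈ linearForms K x y :=
  Submodule.subset_span (by simp)

lemma right_mem_linearForms (x y : R) : y ∈ linearForms K x y :=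
  Submodule.subset_span (by simp)

lemma linearForms_pow_mono (x y : R) {a b : ℕ} (h : a ≤ b) :
    linearForms K x y ^ a ≤ linearForms K x y ^ b := by
  obtain ⟨d, rfl⟩ := Nat.exists_eq_add_of_le h
  intro r hr
  rw [pow_add, ← mul_one r, ← one_pow d]
  exact Submodule.mul_mem_mul hr (Submodule.pow_mem_pow _ (one_mem_linearForms x y) d)

lemma monomial_mem_linearForms_pow (x y : R) {i j m : ℕ} (h : i + j ≤ m) :
    x ^ i * y ^ j ∈ linearForms K x y ^ m := by
  refine linearForms_pow_mono x y h ?_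
  rw [pow_add]
  exact Submodule.mul_mem_mul
    (Submodule.pow_mem_pow _ (left_mem_linearForms x y) i)
    (Submodule.pow_mem_pow _ (right_mem_linearForms x y) j)

open scoped Pointwise in
lemma linearForms_pow_le_span (x y : R) (m : ℕ) :
    linearForms K x y ^ m ≤
      Submodule.span K {r | ∃ i j : ℕ, i + j ≤ m ∧ r = x ^ i * y ^ j} := by
  rw [linearForms, Submodule.span_pow]
  refine Submodule.span_mono ?_
  induction m with
  | zero =>
    intro r hr
    exact ⟨0, 0, by simp, by simpa using hr⟩
  | succ m ih =>
    rw [pow_succ]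
    rintro _ ⟨r, hr, s, hs, rfl⟩
    obtain ⟨i, j, hij, rfl⟩ := ih hr
    rcases hs with rfl | rfl | rfl
    · exact ⟨i, j, by omega, by simp⟩
    · exact ⟨i + 1, j, by omega, by ring⟩
    · exact ⟨i, j + 1, by omega, by ring⟩

/-- If the `N`-th powers of `x` and `y` are both expressible in lower degree, then every
monomial in `x, y` is expressible in degree at most `2 * N`. -/
lemma monomial_mem_linearForms_pow_two_mul {x y : R} {N : ℕ} (hN : 0 < N)
    (hx : x ^ N ∈ linearForms K x y ^ (N - 1)) (hy : y ^ N ∈ linearForms K x y ^ (N - 1)) :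
    ∀ s i j : ℕ, i + j = s → x ^ i * y ^ j ∈ linearForms K x y ^ (2 * N) := by
  intro s
  induction s using Nat.strong_induction_on with
  | _ s ih =>
    intro i j hij
    by_cases hs : s ≤ 2 * N
    · exact monomial_mem_linearForms_pow x y (by omega)
    have lower : x ^ i * y ^ j ∈ linearForms K x y ^ (s - 1) := by
      rcases (by omega : N ≤ i ∨ N ≤ j) with h | h
      · have e : x ^ i * y ^ j = (x ^ (i - N) * y ^ j) * x ^ N := by
          rw [mul_right_comm, ← pow_add, Nat.sub_add_cancel h]
        rw [e, show s - 1 = (i - N + j) + (N - 1) by omega, pow_add]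
        exact Submodule.mul_mem_mul (monomial_mem_linearForms_pow x y le_rfl) hx
      · have e : x ^ i * y ^ j = (x ^ i * y ^ (j - N)) * y ^ N := by
          rw [mul_assoc, ← pow_add, Nat.sub_add_cancel h]
        rw [e, show s - 1 = (i + (j - N)) + (N - 1) by omega, pow_add]
        exact Submodule.mul_mem_mul (monomial_mem_linearForms_pow x y le_rfl) hy
    refine (Submodule.span_le.mpr ?_) (linearForms_pow_le_span x y _ lower)
    rintro _ ⟨a, b, hab, rfl⟩
    exact ih (a + b) (by omega) a b rfl

lemma isIntegral_of_pow_mem_linearForms_pow {x y : R} {N : ℕ} (hN : 0 < N)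
    (hx : x ^ N ∈ linearForms K x y ^ (N - 1)) (hy : y ^ N ∈ linearForms K x y ^ (N - 1)) :
    IsIntegral K x := by
  have hfg : (linearForms K x y ^ (2 * N)).FG :=
    (Submodule.fg_span (Set.toFinite _)).pow _
  refine IsIntegral.of_mem_of_fg (Algebra.adjoin K {x}) (hfg.of_le ?_) x
    (Algebra.self_mem_adjoin_singleton K x)
  rw [Algebra.adjoin_eq_span, Submodule.span_le]
  intro r hr
  obtain ⟨i, rfl⟩ := Submonoid.mem_closure_singleton.mp hr
  simpa using monomial_mem_linearForms_pow_two_mul hN hx hy i i 0 rfl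

lemma sq_add_sub_pow_mem_linearForms_pow {x y b w t : R} {N : ℕ} (hN : 0 < N)
    (hb : b ∈ linearForms K x y) (ht : t ∈ linearForms K x y)
    (hw : w - b ^ N ∈ linearForms K x y ^ (N - 1)) :
    w ^ 2 + t - b ^ (2 * N) ∈ linearForms K x y ^ (2 * N - 1) := by
  have e : w ^ 2 + t - b ^ (2 * N)
      = b ^ N * (w - b ^ N) + b ^ N * (w - b ^ N) + (w - b ^ N) * (w - b ^ N) + t := by ring
  have cross : b ^ N * (w - b ^ N) ∈ linearForms K x y ^ (2 * N - 1) := by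
    rw [show 2 * N - 1 = N + (N - 1) by omega, pow_add]
    exact Submodule.mul_mem_mul (Submodule.pow_mem_pow _ hb N) hw
  have square : (w - b ^ N) * (w - b ^ N) ∈ linearForms K x y ^ (2 * N - 1) := by
    refine linearForms_pow_mono x y (a := (N - 1) + (N - 1)) (by omega) ?_
    rw [pow_add]
    exact Submodule.mul_mem_mul hw hw
  rw [e]
  refine add_mem (add_mem (add_mem cross cross) square) ?_
  exact linearForms_pow_mono x y (a := 1) (by omega) (by simpa using ht)

/-- Along the recursion `z ↦ w ^ 2 + x`, `w ↦ z ^ 2 + y` started at `0`, the leading forms of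
`z (m + 1)` and `w (m + 1)` are the powers `x ^ 2 ^ m` and `y ^ 2 ^ m` in some order. -/
lemma leading_forms_of_recursion {x y : R} {z w : ℕ → R} (hz0 : z 0 = 0) (hw0 : w 0 = 0)
    (hz : ∀ m, z (m + 1) = w m ^ 2 + x) (hw : ∀ m, w (m + 1) = z m ^ 2 + y) (m : ℕ) :
    ∃ a b : R, (a = x ∧ b = y ∨ a = y ∧ b = x) ∧
      z (m + 1) - a ^ 2 ^ m ∈ linearForms K x y ^ (2 ^ m - 1) ∧
      w (m + 1) - b ^ 2 ^ m ∈ linearForms K x y ^ (2 ^ m - 1) := by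
  induction m with
  | zero => exact ⟨x, y, Or.inl ⟨rfl, rfl⟩, by simp [hz, hw0], by simp [hw, hz0]⟩
  | succ m ih =>
    obtain ⟨a, b, hab, hza, hwb⟩ := ih
    have hx := left_mem_linearForms (K := K) x y
    have hy := right_mem_linearForms (K := K) x y
    have ha : a ∈ linearForms K x y := by rcases hab with ⟨rfl, rfl⟩ | ⟨rfl, rfl⟩ <;> assumption
    have hb : b ∈ linearForms K x y := by rcases hab with ⟨rfl, rfl⟩ | ⟨rfl, rfl⟩ <;> assumption
    refine ⟨b, a, by tauto, ?_, ?_⟩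
    · rw [hz, pow_succ' 2 m]
      exact sq_add_sub_pow_mem_linearForms_pow (by positivity) hb hx hwb
    · rw [hw, pow_succ' 2 m]
      exact sq_add_sub_pow_mem_linearForms_pow (by positivity) ha hy hza

lemma isIntegral_of_recursion_eq {x y : R} {z w : ℕ → R} (hz0 : z 0 = 0) (hw0 : w 0 = 0)
    (hz : ∀ m, z (m + 1) = w m ^ 2 + x) (hw : ∀ m, w (m + 1) = z m ^ 2 + y)
    {k n : ℕ} (hkn : k < n) (hzkn : z (n + 1) = z (k + 1)) (hwkn : w (n + 1) = w (k + 1)) :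
    IsIntegral K x := by
  have hlt : 2 ^ k < 2 ^ n := Nat.pow_lt_pow_right (by norm_num) hkn
  have low {a t : R} (ha : a ∈ linearForms K x y)
      (h : t - a ^ 2 ^ k ∈ linearForms K x y ^ (2 ^ k - 1)) :
      t ∈ linearForms K x y ^ (2 ^ n - 1) := by
    rw [← sub_add_cancel t (a ^ 2 ^ k)]
    exact add_mem (linearForms_pow_mono x y (by omega) h)
      (linearForms_pow_mono x y (by omega) (Submodule.pow_mem_pow _ ha _))
  have hx := left_mem_linearForms (K := K) x y
  have hy := right_mem_linearForms (K := K) x y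
  obtain ⟨a, b, hab, hza, hwb⟩ := leading_forms_of_recursion (K := K) hz0 hw0 hz hw k
  obtain ⟨c, d, hcd, hzc, hwd⟩ := leading_forms_of_recursion (K := K) hz0 hw0 hz hw n
  have hz' : z (n + 1) ∈ linearForms K x y ^ (2 ^ n - 1) := by
    rw [hzkn]
    exact low (by rcases hab with ⟨rfl, rfl⟩ | ⟨rfl, rfl⟩ <;> assumption) hza
  have hw' : w (n + 1) ∈ linearForms K x y ^ (2 ^ n - 1) := by
    rw [hwkn]
    exact low (by rcases hab with ⟨rfl, rfl⟩ | ⟨rfl, rfl⟩ <;> assumption) hwb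
  have hc : c ^ 2 ^ n ∈ linearForms K x y ^ (2 ^ n - 1) := by simpa using sub_mem hz' hzc
  have hd : d ^ 2 ^ n ∈ linearForms K x y ^ (2 ^ n - 1) := by simpa using sub_mem hw' hwd
  have hN : 0 < 2 ^ n := by positivity
  rcases hcd with ⟨rfl, rfl⟩ | ⟨rfl, rfl⟩
  · exact isIntegral_of_pow_mem_linearForms_pow hN hc hd
  · exact isIntegral_of_pow_mem_linearForms_pow hN hd hc

end FilteredAlgebra

lemma Set.finite_of_isIntegral_coe {K : Type*} [Field K] {S : Set K}
    (h : IsIntegral K (fun c : S => (c : K))) : S.Finite := by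
  obtain ⟨p, hp, hp0⟩ := h
  refine (p.rootSet_finite K).subset fun c hc => ?_
  rw [Polynomial.mem_rootSet]
  refine ⟨hp.ne_zero, ?_⟩
  have e := congrArg (Pi.evalAlgHom K (fun _ : S => K) ⟨c, hc⟩) hp0
  rw [← Polynomial.aeval_def, ← Polynomial.aeval_algHom_apply, map_zero] at e
  exact e

/-- For the anti-holomorphic quadratic family `f_c(z) = (conj z)² + c`, and integers
`n > k > 0`, the set `Per(n,k) = {c : f_c^[n](0) = f_c^[k](0)}` is finite; in particular
its subset `Per*(n,k)` of parameters with moreover `f_c^[n−k](0) ≠ 0` is finite. -/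
theorem per_finite_antiholomorphic
    (f : ℂ → ℂ → ℂ) (hf : ∀ c z : ℂ, f c z = (starRingEnd ℂ z) ^ 2 + c)
    (n k : ℕ) (hk : 0 < k) (hkn : k < n) :
    {c : ℂ | (f c)^[n] 0 = (f c)^[k] 0}.Finite ∧
      {c : ℂ | (f c)^[n] 0 = (f c)^[k] 0 ∧ (f c)^[n - k] 0 ≠ 0}.Finite := by
  have main : {c : ℂ | (f c)^[n] 0 = (f c)^[k] 0}.Finite := by
    obtain ⟨k, rfl⟩ := Nat.exists_eq_succ_of_ne_zero hk.ne'
    obtain ⟨n, rfl⟩ := Nat.exists_eq_succ_of_ne_zero (by omega : n ≠ 0)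
    apply Set.finite_of_isIntegral_coe
    refine isIntegral_of_recursion_eq (y := fun c => starRingEnd ℂ (c : ℂ))
      (z := fun m c => (f c)^[m] 0) (w := fun m c => starRingEnd ℂ ((f c)^[m] 0))
      rfl (by ext; simp) (fun m => ?_) (fun m => ?_) (Nat.lt_of_succ_lt_succ hkn) ?_ ?_
    · ext c
      exact (Function.iterate_succ_apply' _ _ _).trans (hf _ _)
    · ext c
      change starRingEnd ℂ ((f c)^[m + 1] 0) = ((f c)^[m] 0) ^ 2 + starRingEnd ℂ (c : ℂ)
      simp [Function.iterate_succ_apply', hf]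
    · ext c
      exact c.2
    · ext c
      exact congrArg (starRingEnd ℂ) c.2
  exact ⟨main, main.subset fun c hc => hc.1⟩
end

section
/- Let n > k > 1 be integers and let θ ∈ ℝ/ℤ satisfy (−2)^{n−1}·θ = (−2)^{k−1}·θ and (−2)^{n−k}·θ ≠ θ. Let α ∈ ℝ/ℤ be any angle with (−2)·α = θ. Then 4ⁿ·α = 4ᵏ·α, and α is not periodic under multiplication by 4: for every integer j ≥ 1 one has 4ʲ·α ≠ α. In particular α is strictly preperiodic under the angle-multiplication map M₄ : β ↦ 4·β. -/
/-- An element of an additive commutative group annihilated by two coprime integers is zero. -/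
theorem eq_zero_of_isCoprime_zsmul {G : Type*} [AddCommGroup G] {a b : ℤ} (hab : IsCoprime a b)
    {x : G} (ha : a • x = 0) (hb : b • x = 0) : x = 0 := by
  obtain ⟨u, v, huv⟩ := hab
  rw [← one_zsmul x, ← huv, add_zsmul, mul_zsmul, mul_zsmul, ha, hb, zsmul_zero, zsmul_zero,
    add_zero]

theorem isCoprime_neg_two_pow_four_pow_sub_one (k : ℕ) {j : ℕ} (hj : 1 ≤ j) :
    IsCoprime ((-2 : ℤ) ^ k) (4 ^ j - 1) := by
  obtain ⟨i, rfl⟩ := Nat.exists_eq_add_of_le' hj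
  exact IsCoprime.pow_left ⟨-2 * 4 ^ i, -1, by ring⟩

/-- Transfer of the Misiurewicz property from the degree `−2` angle map to the degree
`4` angle map: if `θ ∈ ℝ/ℤ` satisfies `(−2)^(n−1)·θ = (−2)^(k−1)·θ` and
`(−2)^(n−k)·θ ≠ θ` for integers `n > k > 1`, and `α ∈ ℝ/ℤ` satisfies `(−2)·α = θ`, then
`4ⁿ·α = 4ᵏ·α` and `4ʲ·α ≠ α` for every `j ≥ 1`; i.e. `α` is strictly preperiodic under
`M₄ : β ↦ 4β`. -/
theorem misiurewicz_angle_transfer_deg_four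
    (n k : ℕ) (hk : 1 < k) (hkn : k < n) (θ α : UnitAddCircle)
    (h1 : ((-2 : ℤ) ^ (n - 1)) • θ = ((-2 : ℤ) ^ (k - 1)) • θ)
    (h2 : ((-2 : ℤ) ^ (n - k)) • θ ≠ θ)
    (hα : (-2 : ℤ) • α = θ) :
    ((4 : ℕ) ^ n) • α = ((4 : ℕ) ^ k) • α ∧
      ∀ j : ℕ, 1 ≤ j → ((4 : ℕ) ^ j) • α ≠ α := by
  obtain ⟨p, rfl⟩ := Nat.exists_eq_add_of_lt hkn
  obtain ⟨m, rfl⟩ := Nat.exists_eq_add_of_lt hk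
  subst hα
  have hann : ((-2 : ℤ) ^ (1 + m + 1) * ((-2) ^ (p + 1) - 1)) • α = 0 := by
    rw [smul_smul, smul_smul, ← sub_eq_zero, ← sub_smul] at h1
    convert h1 using 2
    rw [show 1 + m + 1 + p + 1 - 1 = m + 1 + (p + 1) by omega,
      show 1 + m + 1 - 1 = m + 1 by omega]
    ring
  rw [show 1 + m + 1 + p + 1 - (1 + m + 1) = p + 1 by omega] at h2
  constructor
  · rw [← natCast_zsmul, ← natCast_zsmul, ← sub_eq_zero, ← sub_smul]
    have hfactor : (((4 ^ (1 + m + 1 + p + 1) : ℕ) : ℤ) - ((4 ^ (1 + m + 1) : ℕ) : ℤ)) =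
        ((-2) ^ (1 + m + 1) * ((-2) ^ (p + 1) + 1)) *
          ((-2) ^ (1 + m + 1) * ((-2) ^ (p + 1) - 1)) := by
      push_cast
      rw [show (4 : ℤ) = (-2) * (-2) by norm_num]
      simp only [mul_pow]
      ring
    rw [hfactor, mul_zsmul, hann, zsmul_zero]
  · intro j hj hper
    have hper' : ((4 : ℤ) ^ j - 1) • α = 0 := by
      rw [sub_smul, one_smul, sub_eq_zero]
      exact_mod_cast hper
    have hzero : ((-2 : ℤ) ^ (p + 1) - 1) • α = 0 := by
      refine eq_zero_of_isCoprime_zsmul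
        (isCoprime_neg_two_pow_four_pow_sub_one (1 + m + 1) hj) ?_ ?_
      · rw [← mul_zsmul, hann]
      · rw [smul_comm, hper', zsmul_zero]
    apply h2
    rw [← sub_eq_zero, smul_comm, ← zsmul_sub]
    rw [sub_smul, one_smul] at hzero
    rw [hzero, zsmul_zero]
end
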